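/- arXiv:2310.12116 — 5 statements merged into one kernel-verified Lean document; each statement's English description precedes it below -/
import Mathlib

section
/- Let d, k be natural numbers with 1 ≤ k ≤ d, let p, q : Fin d → ℝ be two d-dimensional data items, and let α be an index with α < k (so that α + d − k < d). If sorted(p)(α + d − k) < sorted(q)(α) (i.e., MI_max(p, k, α) < MI_min(q, k, α)), then q does not k-dominate p. -/
/-- The nondecreasing rearrangement of `u` (Mathlib's `Tuple.sort`). -/
noncomputable def sortedTuple {d : ℕ} (u : Fin d → ℝ) : Fin d → ℝ :=
  u ∘ Tuple.sort u

/-- `q` k-dominates `p`: there is a set `S` of at least `k` coordinates on which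
`q` is no worse than `p`, and `q` is strictly better on some coordinate. -/
def kDom {d : ℕ} (k : ℕ) (q p : Fin d → ℝ) : Prop :=
  (∃ S : Finset (Fin d), k ≤ S.card ∧ ∀ j ∈ S, q j ≤ p j) ∧ ∃ j', q j' < p j'

/-! Suppose `q ≤ p` on a set `S` of at least `k` coordinates, and let `a` be the `j`-th smallest
entry of `p`, counting from `0`. More than `j` entries of `p` are at most `a`, and all
but at most `d - k` of these sit at coordinates of `S`, where `q` is at most `a` as well.
Hence more than `j - (d - k)` entries of `q` are at most `a`, so `a` cannot lie below the `i`-th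
smallest entry of `q` for any `i ≤ j - (d - k)`. -/

open Finset

theorem lt_card_le_iff_comp_sort_le {R : Type*} [LinearOrder R] {d : ℕ} (u : Fin d → R)
    (j : Fin d) (a : R) : (j : ℕ) < #{x | u x ≤ a} ↔ (u ∘ Tuple.sort u) j ≤ a := by
  have card_sort : #{x | (u ∘ Tuple.sort u) x ≤ a} = #{x | u x ≤ a} :=
    card_equiv (Tuple.sort u) fun x => by simp only [mem_filter_univ, Function.comp_apply]
  rw [← card_sort]
  exact Tuple.lt_card_le_iff_apply_le_of_monotone (Tuple.monotone_sort u)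

theorem card_add_card_le_le_of_forall_mem_le {ι R : Type*} [Fintype ι] [Preorder R]
    [DecidableLE R] {p q : ι → R} {S : Finset ι} (hqp : ∀ x ∈ S, q x ≤ p x) (a : R) :
    #S + #{x | p x ≤ a} ≤ Fintype.card ι + #{x | q x ≤ a} := by
  classical
  set P : Finset ι := {x | p x ≤ a}
  have inter_subset : S ∩ P ⊆ ({x | q x ≤ a} : Finset ι) := by
    intro x hx
    obtain ⟨hxS, hxP⟩ := mem_inter.1 hx
    exact (mem_filter_univ x).2 ((hqp x hxS).trans ((mem_filter_univ x).1 hxP))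
  calc
    #S + #P = #(S ∪ P) + #(S ∩ P) := (card_union_add_card_inter S P).symm
    _ ≤ Fintype.card ι + #{x | q x ≤ a} :=
      add_le_add (card_le_univ _) (card_le_card inter_subset)

theorem mi_threshold_not_kDom_general {R : Type*} [LinearOrder R] {d k : ℕ} {p q : Fin d → R}
    {i j : Fin d} (hij : d + i ≤ j + k) (h : (p ∘ Tuple.sort p) j < (q ∘ Tuple.sort q) i) :
    ¬ ∃ S : Finset (Fin d), k ≤ #S ∧ ∀ x ∈ S, q x ≤ p x := by
  rintro ⟨S, hkS, hqp⟩
  set a := (p ∘ Tuple.sort p) j with ha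
  have card_p : j < #{x | p x ≤ a} := (lt_card_le_iff_comp_sort_le p j a).2 ha.ge
  have card_q : #{x | q x ≤ a} ≤ i :=
    not_lt.1 fun hi => h.not_ge ((lt_card_le_iff_comp_sort_le q i a).1 hi)
  have card_S : #S + #{x | p x ≤ a} ≤ d + #{x | q x ≤ a} := by
    simpa only [Fintype.card_fin] using card_add_card_le_le_of_forall_mem_le hqp a
  omega

/-- If `MI_max(p, k, α) < MI_min(q, k, α)` then `q` cannot k-dominate `p`. -/
theorem mi_threshold_not_kDom {d k : ℕ} (hk1 : 1 ≤ k) (hkd : k ≤ d)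
    (p q : Fin d → ℝ) (α : ℕ) (hα : α < k)
    (h : sortedTuple p ⟨α + d - k, by omega⟩ < sortedTuple q ⟨α, by omega⟩) :
    ¬ kDom k q p :=
  fun hdom => mi_threshold_not_kDom_general (by dsimp only; omega) h hdom.1
end

section
/- Let d, k be natural numbers with 1 ≤ k ≤ d, let p, q : Fin d → ℝ, and let α be an index with α < k. If sorted(p)(α + d − k) < sorted(q)(α), then the number of coordinates j : Fin d with q j ≤ p j is at most k − 1, i.e., the cardinality of the finite set {j : Fin d | q j ≤ p j} is at most k − 1. -/
/-! Let `t` be the entry at index `α + d - k` of `p` sorted. More than `α + d - k` coordinates of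
`p` are at most `t`, while at most `α` coordinates of `q` are, because `t` lies below the entry at
index `α` of `q` sorted. A coordinate with `q j ≤ p j` and `p j ≤ t` has `q j ≤ t`, so
inclusion-exclusion leaves at most `k - 1` coordinates with `q j ≤ p j`. -/

section

open Finset

theorem card_filter_add_card_filter_le {ι : Type*} (s : Finset ι) {P Q R : ι → Prop}
    [DecidablePred P] [DecidablePred Q] [DecidablePred R] (h : ∀ i ∈ s, P i → Q i → R i) :
    #{i ∈ s | P i} + #{i ∈ s | Q i} ≤ #s + #{i ∈ s | R i} := by
  classical
  rw [← card_union_add_card_inter, ← filter_or, ← filter_and]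
  refine add_le_add (card_filter_le s _) (card_le_card fun i hi => ?_)
  obtain ⟨his, hP, hQ⟩ := mem_filter.1 hi
  exact mem_filter.2 ⟨his, h i his hP hQ⟩

variable {β : Type*} [Preorder β] [DecidableLE β] {d : ℕ}

theorem lt_card_le_iff_apply_le_of_monotone_comp_perm {u : Fin d → β} {σ : Equiv.Perm (Fin d)}
    (hσ : Monotone (u ∘ σ)) (t : β) (j : Fin d) :
    j < #{i | u i ≤ t} ↔ u (σ j) ≤ t := by
  have hcard : #{i | (u ∘ σ) i ≤ t} = #{i | u i ≤ t} :=
    card_equiv σ fun i => by simp only [mem_filter_univ, Function.comp_apply]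
  rw [← hcard]
  exact Tuple.lt_card_le_iff_apply_le_of_monotone hσ

theorem card_le_of_mi_threshold_general {p q : Fin d → β} {σ τ : Equiv.Perm (Fin d)}
    (hp : Monotone (p ∘ σ)) (hq : Monotone (q ∘ τ)) {i j : Fin d} (h : p (σ i) < q (τ j)) :
    #{l | q l ≤ p l} + i < d + j := by
  have hcount : #{l | q l ≤ p l} + #{l | p l ≤ p (σ i)} ≤ d + #{l | q l ≤ p (σ i)} := by
    simpa only [card_fin] using
      card_filter_add_card_filter_le univ fun l _ (hqp : q l ≤ p l) hpt => hqp.trans hpt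
  have hp_card : i < #{l | p l ≤ p (σ i)} :=
    (lt_card_le_iff_apply_le_of_monotone_comp_perm hp _ i).2 le_rfl
  have hq_card : #{l | q l ≤ p (σ i)} ≤ j :=
    not_lt.1 <| (lt_card_le_iff_apply_le_of_monotone_comp_perm hq _ j).not.2 h.not_ge
  lia

end

/-- If `MI_max(p, k, α) < MI_min(q, k, α)` then `q` is no worse than `p` on at
most `k - 1` coordinates. -/
theorem card_le_of_mi_threshold {d k : ℕ} (hk1 : 1 ≤ k) (hkd : k ≤ d)
    (p q : Fin d → ℝ) (α : ℕ) (hα : α < k)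
    (h : sortedTuple p ⟨α + d - k, by omega⟩ < sortedTuple q ⟨α, by omega⟩) :
    (Finset.univ.filter (fun j : Fin d => q j ≤ p j)).card ≤ k - 1 := by
  have hcard := card_le_of_mi_threshold_general (Tuple.monotone_sort p) (Tuple.monotone_sort q) h
  dsimp only at hcard
  lia
end

section
/- Let d, k be natural numbers with 1 ≤ k ≤ d and let p, q : Fin d → ℝ. If q k-dominates p, then for every index α with α < k one has sorted(q)(α) ≤ sorted(p)(α + d − k), i.e., MI_min(q, k, α) ≤ MI_max(p, k, α) for all admissible α. -/
/-!
The `i`-th smallest value of `u` (counting from `0`) is at most `b` exactly when more than `i`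
values of `u` are at most `b`. Take `b` to be the `j`-th smallest value of `p`: more than `j` values
of `p` are at most `b`, all but at most `d - #S` of them at coordinates in `S`, where `q ≤ p`.
So more than `j + #S - d` values of `q` are at most `b`.
-/

section

open Finset

variable {ι β : Type*} [Preorder β] {d : ℕ}

theorem card_filter_le_add_card_le_card_add_card_filter_le [Fintype ι] [DecidableLE β]
    {p q : ι → β} {S : Finset ι} (hS : ∀ x ∈ S, q x ≤ p x) (b : β) :
    #{x | p x ≤ b} + #S ≤ Fintype.card ι + #{x | q x ≤ b} := by
  classical
  have hsub : univ.filter (p · ≤ b) ∩ S ⊆ univ.filter (q · ≤ b) := fun x hx ↦ by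
    simp only [mem_inter, mem_filter, mem_univ, true_and] at hx ⊢
    exact (hS x hx.2).trans hx.1
  calc #{x | p x ≤ b} + #S
      = #(univ.filter (p · ≤ b) ∪ S) + #(univ.filter (p · ≤ b) ∩ S) :=
        (card_union_add_card_inter _ _).symm
    _ ≤ Fintype.card ι + #{x | q x ≤ b} := add_le_add (card_le_univ _) (card_le_card hsub)

theorem lt_card_filter_le_iff_apply_le_of_monotone_comp [Fintype ι] [DecidableLE β]
    {u : ι → β} {σ : Fin d ≃ ι} (hσ : Monotone (u ∘ σ)) {i : Fin d} {b : β} :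
    i < #{x | u x ≤ b} ↔ u (σ i) ≤ b := by
  have hcard : #{l | (u ∘ σ) l ≤ b} = #{x | u x ≤ b} := card_equiv σ fun _ ↦ by simp
  rw [← hcard]
  exact Tuple.lt_card_le_iff_apply_le_of_monotone hσ

theorem kDom_mi_min_le_mi_max_general {p q : ι → β} {S : Finset ι} (hS : ∀ x ∈ S, q x ≤ p x)
    {σ τ : Fin d ≃ ι} (hσ : Monotone (q ∘ σ)) (hτ : Monotone (p ∘ τ))
    {i j : Fin d} (hij : i + d ≤ j + #S) : q (σ i) ≤ p (τ j) := by
  classical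
  let _ : Fintype ι := Fintype.ofEquiv _ σ
  have hι : Fintype.card ι = d := by rw [← Fintype.card_congr σ, Fintype.card_fin]
  have hp : j < #{x | p x ≤ p (τ j)} :=
    (lt_card_filter_le_iff_apply_le_of_monotone_comp hτ).2 le_rfl
  have hpq := card_filter_le_add_card_le_card_add_card_filter_le hS (p (τ j))
  exact (lt_card_filter_le_iff_apply_le_of_monotone_comp hσ).1 (by omega)

end

/-- If `q` k-dominates `p` then `MI_min(q, k, α) ≤ MI_max(p, k, α)` for every `α < k`. -/
theorem kDom_mi_min_le_mi_max {d k : ℕ} (hk1 : 1 ≤ k) (hkd : k ≤ d)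
    (p q : Fin d → ℝ) (hdom : kDom k q p) (α : ℕ) (hα : α < k) :
    sortedTuple q ⟨α, by omega⟩ ≤ sortedTuple p ⟨α + d - k, by omega⟩ := by
  obtain ⟨⟨S, hkS, hS⟩, -⟩ := hdom
  exact kDom_mi_min_le_mi_max_general hS (Tuple.monotone_sort q) (Tuple.monotone_sort p)
    (by dsimp only; omega)
end

section
/- Let ι be a type with decidable equality, W : Finset ι, x : ι → (Fin d → ℝ), P : ι → ℝ, and k ≤ d. Let u ∈ W, u_old ∈ W with u_old ≠ u, and u_new ∉ W. If x(u_old) k-dominates x(u) with P(u_old) ≠ 1 and x(u_new) k-dominates x(u), then the window update that removes u_old and inserts u_new satisfies ℙ_{k-sky}(insert u_new (W \ {u_old}), u) = (ℙ_{k-sky}(W, u) / (1 − P(u_old))) · (1 − P(u_new)). -/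
open Classical in
/-- The k-dominant skyline probability of item `u` within window `W`. -/
noncomputable def kSkyProb {ι : Type*} [DecidableEq ι] {d : ℕ} (k : ℕ)
    (x : ι → Fin d → ℝ) (P : ι → ℝ) (W : Finset ι) (u : ι) : ℝ :=
  P u * ∏ u' ∈ W.filter (fun v => v ≠ u ∧ kDom k (x v) (x u)), (1 - P u')

theorem kDom.ne {d k : ℕ} {q p : Fin d → ℝ} (h : kDom k q p) : q ≠ p := by
  rintro rfl
  obtain ⟨_, _, hlt⟩ := h
  exact lt_irrefl _ hlt

section WindowUpdate

variable {ι : Type*} [DecidableEq ι] {d k : ℕ} {W : Finset ι} {x : ι → Fin d → ℝ}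
  {P : ι → ℝ} {u v : ι}

theorem kSkyProb_insert_of_kDom (hv : v ∉ W) (hdom : kDom k (x v) (x u)) :
    kSkyProb k x P (insert v W) u = kSkyProb k x P W u * (1 - P v) := by
  classical
  have hne : v ≠ u := ne_of_apply_ne x hdom.ne
  simp only [kSkyProb]
  rw [Finset.filter_insert, if_pos ⟨hne, hdom⟩,
    Finset.prod_insert (mt (Finset.mem_of_mem_filter v) hv), mul_left_comm, mul_comm]

theorem kSkyProb_erase_of_kDom (hv : v ∈ W) (hdom : kDom k (x v) (x u)) (hP : P v ≠ 1) :
    kSkyProb k x P (W.erase v) u = kSkyProb k x P W u / (1 - P v) := by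
  rw [eq_div_iff (sub_ne_zero.mpr hP.symm), ← kSkyProb_insert_of_kDom (W.notMem_erase v) hdom,
    Finset.insert_erase hv]

end WindowUpdate

/-- A sliding-window update removing `u_old` and inserting `u_new`, both of
which k-dominate `u`, updates its k-dominant skyline probability accordingly. -/
theorem kSkyProb_window_update {ι : Type*} [DecidableEq ι] {d k : ℕ} (hkd : k ≤ d)
    (W : Finset ι) (x : ι → Fin d → ℝ) (P : ι → ℝ)
    (u uold unew : ι) (hu : u ∈ W) (hold : uold ∈ W) (hne : uold ≠ u) (hnew : unew ∉ W)
    (hdomold : kDom k (x uold) (x u)) (hP : P uold ≠ 1)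
    (hdomnew : kDom k (x unew) (x u)) :
    kSkyProb k x P (insert unew (W.erase uold)) u
      = kSkyProb k x P W u / (1 - P uold) * (1 - P unew) := by
  have hnew' : unew ∉ W.erase uold := mt Finset.mem_of_mem_erase hnew
  rw [kSkyProb_insert_of_kDom hnew' hdomnew, kSkyProb_erase_of_kDom hold hdomold hP]
end

section
/- Let d, k be natural numbers with 1 ≤ k ≤ d, let q : Fin d → ℝ, and let W be a finite set of points of Fin d → ℝ. Then the set of items of W that are k-dominated by q is contained in the All-Indexing candidate set: {e ∈ W | q ≺_k e} ⊆ {e ∈ W | for every α < k, MI_min(q, k, α) ≤ MI_max(e, k, α)}. (Soundness of the AI pruning filter: no item whose k-dominant probability must be updated is pruned.) -/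
/-!
Let `q ≤ e` on a set `S` of at least `k` coordinates, and let `α < k`. Counting ranks from `0`,
`α` coordinates have rank below `α` in `q`, and `k - 1 - α` have rank above `α + d - k` in `e`.
Together these are fewer than `k`, so some `j ∈ S` is of neither kind, and `q j ≤ e j` lies between
the two order statistics.
-/

theorem exists_mem_le_symm_apply_symm_apply_le {ι : Type*} {d : ℕ} (σ τ : Fin d ≃ ι)
    {S : Finset ι} {a b : Fin d} (hab : (a : ℕ) + d ≤ b + S.card) :
    ∃ j ∈ S, a ≤ σ.symm j ∧ τ.symm j ≤ b := by
  classical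
  let lowRank := (Finset.Iio a).map σ.toEmbedding
  let highRank := (Finset.Ioi b).map τ.toEmbedding
  have card_lt : (lowRank ∪ highRank).card < S.card :=
    calc (lowRank ∪ highRank).card ≤ lowRank.card + highRank.card := Finset.card_union_le _ _
      _ = a + (d - 1 - b) := by
        simp only [lowRank, highRank, Finset.card_map, Fin.card_Iio, Fin.card_Ioi]
      _ < S.card := by omega
  obtain ⟨j, hjS, hj⟩ := Finset.exists_mem_notMem_of_card_lt_card card_lt
  simp only [lowRank, highRank, Finset.mem_union, Finset.mem_map_equiv, Finset.mem_Iio,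
    Finset.mem_Ioi, not_or, not_lt] at hj
  exact ⟨j, hjS, hj⟩

theorem ai_filter_sound_general {ι β : Type*} [Preorder β] {d : ℕ} {q e : ι → β}
    {σ τ : Fin d ≃ ι} (hq : Monotone (q ∘ σ)) (he : Monotone (e ∘ τ))
    {S : Finset ι} (hS : ∀ j ∈ S, q j ≤ e j)
    {a b : Fin d} (hab : (a : ℕ) + d ≤ b + S.card) :
    (q ∘ σ) a ≤ (e ∘ τ) b := by
  obtain ⟨j, hjS, haj, hjb⟩ := exists_mem_le_symm_apply_symm_apply_le σ τ hab
  calc (q ∘ σ) a ≤ (q ∘ σ) (σ.symm j) := hq haj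
    _ = q j := congrArg q (σ.apply_symm_apply j)
    _ ≤ e j := hS j hjS
    _ = (e ∘ τ) (τ.symm j) := congrArg e (τ.apply_symm_apply j).symm
    _ ≤ (e ∘ τ) b := he hjb

/-- Soundness of the AI pruning filter: every item of `W` that is k-dominated
by `q` lies in the All-Indexing candidate set. -/
theorem ai_filter_sound {d k : ℕ} (hk1 : 1 ≤ k) (hkd : k ≤ d)
    (q : Fin d → ℝ) (W : Finset (Fin d → ℝ)) :
    {e | e ∈ W ∧ kDom k q e} ⊆
      {e | e ∈ W ∧ ∀ α (hα : α < k),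
        sortedTuple q ⟨α, by omega⟩ ≤ sortedTuple e ⟨α + d - k, by omega⟩} := by
  rintro e ⟨heW, ⟨S, hcard, hS⟩, -⟩
  exact ⟨heW, fun α hα => ai_filter_sound_general (Tuple.monotone_sort q) (Tuple.monotone_sort e)
    hS (by grind)⟩
end
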